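/- arXiv:2204.14150 — 2 statements merged into one kernel-verified Lean document; each statement's English description precedes it below -/
import Mathlib

section
/- Let G be a finite simple connected graph in which every block is a cycle. Then 2·W(G) ≤ Sz*(G). -/
open Finset

attribute [local instance] Classical.propDecidable

variable {V : Type*}

/-- `n_G(s,t)`: the number of vertices strictly closer to `s` than to `t`. -/
noncomputable def closerCount [Fintype V] (G : SimpleGraph V) (s t : V) : ℕ :=
  (Finset.univ.filter fun w => G.dist w s < G.dist w t).card

/-- `o_G(s,t)`: the number of vertices equidistant from `s` and `t`. -/
noncomputable def equidistCount [Fintype V] (G : SimpleGraph V) (s t : V) : ℕ :=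
  (Finset.univ.filter fun w => G.dist w s = G.dist w t).card

lemma equidistCount_comm [Fintype V] (G : SimpleGraph V) (s t : V) :
    equidistCount G s t = equidistCount G t s := by
  unfold equidistCount
  congr 1
  ext w
  simp only [Finset.mem_filter]
  exact and_congr_right fun _ => ⟨Eq.symm, Eq.symm⟩

/-- `o_G` as a function on unordered pairs (edges). -/
noncomputable def equidistSym2 [Fintype V] (G : SimpleGraph V) : Sym2 V → ℕ :=
  Sym2.lift ⟨fun s t => equidistCount G s t, fun s t => equidistCount_comm G s t⟩

/-- The Wiener index: the sum of distances over unordered pairs of vertices. -/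
noncomputable def wiener [Fintype V] (G : SimpleGraph V) : ℕ :=
  ∑ p : Sym2 V, Sym2.lift ⟨fun u v => G.dist u v, fun _ _ => G.dist_comm⟩ p

/-- The Szeged index `Sz(G) = Σ_{{s,t} ∈ E(G)} n_G(s,t) n_G(t,s)`. -/
noncomputable def szeged [Fintype V] (G : SimpleGraph V) : ℕ :=
  ∑ e ∈ G.edgeFinset,
    Sym2.lift ⟨fun s t => closerCount G s t * closerCount G t s,
      fun _ _ => Nat.mul_comm _ _⟩ e

/-- The revised Szeged index
`Sz*(G) = Σ_{{s,t} ∈ E(G)} (n_G(s,t) + o_G(s,t)/2) (n_G(t,s) + o_G(t,s)/2)`. -/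
noncomputable def revisedSzeged [Fintype V] (G : SimpleGraph V) : ℚ :=
  ∑ e ∈ G.edgeFinset,
    Sym2.lift ⟨fun s t =>
      ((closerCount G s t : ℚ) + (equidistCount G s t : ℚ) / 2) *
        ((closerCount G t s : ℚ) + (equidistCount G t s : ℚ) / 2),
      fun _ _ => mul_comm _ _⟩ e

/-- An edge `{s,t}` is `(u,v)`-distance-disparate if `d(u,s) < d(u,t)` and `d(v,s) > d(v,t)`,
or `d(u,s) > d(u,t)` and `d(v,s) < d(v,t)`. -/
def IsDisparate (G : SimpleGraph V) (u v : V) : Sym2 V → Prop :=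
  Sym2.lift ⟨fun s t =>
    (G.dist u s < G.dist u t ∧ G.dist v t < G.dist v s) ∨
      (G.dist u t < G.dist u s ∧ G.dist v s < G.dist v t),
    fun _ _ => propext or_comm⟩

/-- `dis_G(u,v)`: the number of `(u,v)`-distance-disparate edges of `G`. -/
noncomputable def disCount [Fintype V] (G : SimpleGraph V) (u v : V) : ℕ :=
  (G.edgeFinset.filter (IsDisparate G u v)).card

/-- An edge `{s,t}` is `(u,v)`-distance-equal if `d(u,s) = d(u,t)` and `d(v,s) = d(v,t)`. -/
def IsDistEqual (G : SimpleGraph V) (u v : V) : Sym2 V → Prop :=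
  Sym2.lift ⟨fun s t => G.dist u s = G.dist u t ∧ G.dist v s = G.dist v t,
    fun _ _ => propext ⟨fun h => ⟨h.1.symm, h.2.symm⟩, fun h => ⟨h.1.symm, h.2.symm⟩⟩⟩

/-- `deq_G(u,v)`: the number of `(u,v)`-distance-equal edges of `G`. -/
noncomputable def deqCount [Fintype V] (G : SimpleGraph V) (u v : V) : ℕ :=
  (G.edgeFinset.filter (IsDistEqual G u v)).card

/-- A subgraph without cut vertices: it is connected and deleting any single vertex leaves
it preconnected. -/
def NoCutVertexSub (G : SimpleGraph V) (H : G.Subgraph) : Prop :=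
  H.Connected ∧ ∀ v : V, ((H.deleteVerts {v}).coe.Preconnected)

/-- A block of `G`: a maximal connected subgraph without a cut vertex. -/
def IsBlock (G : SimpleGraph V) (B : G.Subgraph) : Prop :=
  NoCutVertexSub G B ∧ ∀ H : G.Subgraph, NoCutVertexSub G H → B ≤ H → B = H

/-- The subgraph `B` is a single edge together with its two endpoints. -/
def IsEdgeBlock (G : SimpleGraph V) (B : G.Subgraph) : Prop :=
  ∃ (u v : V) (h : G.Adj u v), B = G.subgraphOfAdj h

/-- The subgraph `B` is a cycle (of some length `n ≥ 3`). -/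
def IsCycleBlock (G : SimpleGraph V) (B : G.Subgraph) : Prop :=
  ∃ n : ℕ, 3 ≤ n ∧ Nonempty (B.coe ≃g SimpleGraph.cycleGraph n)

/-- A cactus graph: a connected graph in which every block is an edge or a cycle. -/
def IsCactus (G : SimpleGraph V) : Prop :=
  G.Connected ∧ ∀ B : G.Subgraph, IsBlock G B → IsEdgeBlock G B ∨ IsCycleBlock G B

/-!
Fix vertices `u`, `v` and put `f x = d(x, v) - d(x, u)`, so that `f u - f v = 2 d(u, v)`. For
each integer `c` with `f v ≤ c < f u`, the set `{x | f x ≤ c}` separates `v` from `u`. If `G` is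
2-edge-connected, each of the resulting edge cuts has at least two edges, so `∑ |f s - f t|` over
the edges `st` is at least `4 d(u, v)`.

For an edge `st`, on the other hand, `|f s - f t| = |g u - g v|`, where `g w = d(w, t) - d(w, s)`
has values in `{-1, 0, 1}`. Hence `|f s - f t| ≤ 1 - g u * g v`, and summing the right-hand side
over all `u`, `v` gives four times the contribution of `st` to the revised Szeged index.

A graph all of whose blocks are cycles is 2-edge-connected, as every edge lies in a block.
-/

section EdgeCut

variable {G : SimpleGraph V} {u v : V} {k : ℕ}

/-- The edges of `G` with exactly one endpoint in `S`, i.e. the edge cut determined by `S`. -/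
def edgeCut (G : SimpleGraph V) (S : Set V) : Set (Sym2 V) :=
  {e ∈ G.edgeSet | ∃ x ∈ S, ∃ y ∉ S, e = s(x, y)}

theorem le_encard_edgeCut {S : Set V} (h : G.IsEdgeReachable k u v) (hu : u ∈ S) (hv : v ∉ S) :
    k ≤ (edgeCut G S).encard := by
  by_contra! hlt
  obtain ⟨p⟩ := h hlt
  obtain ⟨d, -, hd₁, hd₂⟩ := p.exists_boundary_dart S hu hv
  have hadj := SimpleGraph.deleteEdges_adj.1 d.adj
  exact hadj.2 ⟨hadj.1, d.fst, hd₁, d.snd, hd₂, rfl⟩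

/-- The variation `|f x - f y|` of `f` along the unordered pair `e = {x, y}`. -/
def edgeVariation (f : V → ℤ) (e : Sym2 V) : ℤ :=
  (e.map f).sup - (e.map f).inf

theorem edgeVariation_mk (f : V → ℤ) (x y : V) : edgeVariation f s(x, y) = |f x - f y| := by
  simp [edgeVariation, max_sub_min_eq_abs']

theorem card_Ico_inf_sup (f : V → ℤ) (e : Sym2 V) :
    (#(Ico (e.map f).inf (e.map f).sup) : ℤ) = edgeVariation f e := by
  rw [Int.card_Ico_of_le _ _ (Sym2.inf_le_sup _), edgeVariation]

theorem le_card_filter_mem_Ico [Fintype G.edgeSet] (h : G.IsEdgeReachable k u v) (f : V → ℤ)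
    {c : ℤ} (hc : c ∈ Ico (f u) (f v)) :
    k ≤ #{e ∈ G.edgeFinset | c ∈ Ico (e.map f).inf (e.map f).sup} := by
  rw [mem_Ico] at hc
  have hcut := le_encard_edgeCut h (S := {x | f x ≤ c}) hc.1 (not_le.2 hc.2)
  have hsub : edgeCut G {x | f x ≤ c} ⊆
      ({e ∈ G.edgeFinset | c ∈ Ico (e.map f).inf (e.map f).sup} : Finset (Sym2 V)) := by
    rintro _ ⟨he, x, hx, y, hy, rfl⟩
    simpa [he] using ⟨Or.inl hx, Or.inr (not_le.1 hy)⟩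
  simpa only [Set.encard_coe_eq_coe_finsetCard, Nat.cast_le] using
    hcut.trans (Set.encard_le_encard hsub)

theorem mul_sub_le_sum_edgeVariation [Fintype G.edgeSet] (h : G.IsEdgeReachable k u v)
    (f : V → ℤ) : k * (f v - f u) ≤ ∑ e ∈ G.edgeFinset, edgeVariation f e := by
  let crosses (e : Sym2 V) (c : ℤ) : Prop := c ∈ Ico (e.map f).inf (e.map f).sup
  -- A discrete coarea formula: count the pairs of an edge and a level that it crosses in two ways.
  calc (k : ℤ) * (f v - f u)
    _ ≤ k * #(Ico (f u) (f v)) := by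
        rw [Int.card_Ico]
        gcongr
        exact Int.self_le_toNat _
    _ ≤ ∑ c ∈ Ico (f u) (f v), #(G.edgeFinset.bipartiteBelow crosses c) := by
        have hcount := card_nsmul_le_sum _ _ k fun c hc ↦ le_card_filter_mem_Ico h f hc
        rw [smul_eq_mul, mul_comm] at hcount
        exact_mod_cast hcount
    _ = ∑ e ∈ G.edgeFinset, #((Ico (f u) (f v)).bipartiteAbove crosses e) := by
        exact_mod_cast (sum_card_bipartiteAbove_eq_sum_card_bipartiteBelow crosses).symm
    _ ≤ ∑ e ∈ G.edgeFinset, edgeVariation f e := by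
        push_cast
        refine sum_le_sum fun e _ ↦ ?_
        rw [← card_Ico_inf_sup]
        exact_mod_cast card_le_card fun c hc ↦ (mem_bipartiteAbove _).1 hc |>.2

end EdgeCut

section DistDiff

variable {G : SimpleGraph V} {s t : V}

/-- How much closer `x` is to `s` than to `t`: the difference `d(x, t) - d(x, s)`. -/
noncomputable def distDiff (G : SimpleGraph V) (s t x : V) : ℤ :=
  G.dist x t - G.dist x s

theorem distDiff_swap (G : SimpleGraph V) (s t x : V) : distDiff G t s x = -distDiff G s t x := by
  simp [distDiff]

theorem distDiff_sub_distDiff (G : SimpleGraph V) (u v s t : V) :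
    distDiff G u v s - distDiff G u v t = distDiff G s t u - distDiff G s t v := by
  simp only [distDiff, G.dist_comm (u := s), G.dist_comm (u := t)]
  ring

theorem abs_distDiff_le_one (h : G.Adj s t) (x : V) : |distDiff G s t x| ≤ 1 := by
  rw [distDiff, abs_le]
  have := h.diff_dist_adj (u := x)
  omega

theorem four_mul_dist_le_sum_edgeVariation [Fintype G.edgeSet] {u v : V}
    (h : G.IsEdgeReachable 2 u v) :
    4 * (G.dist u v : ℤ) ≤ ∑ e ∈ G.edgeFinset, edgeVariation (distDiff G u v) e := by
  have hends : distDiff G u v u - distDiff G u v v = 2 * G.dist u v := by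
    simp only [distDiff, SimpleGraph.dist_self, G.dist_comm (u := v)]
    push_cast
    ring
  have hbound := mul_sub_le_sum_edgeVariation h.symm (distDiff G u v)
  rw [hends] at hbound
  push_cast at hbound
  linarith

end DistDiff

section RevisedSzeged

variable [Fintype V] {G : SimpleGraph V} {s t : V}

theorem two_mul_closerCount_add_equidistCount (h : G.Adj s t) :
    2 * (closerCount G s t : ℤ) + equidistCount G s t = ∑ w, (1 + distDiff G s t w) := by
  rw [closerCount, equidistCount, card_filter, card_filter]
  push_cast
  rw [mul_sum, ← sum_add_distrib]
  refine sum_congr rfl fun w _ ↦ ?_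
  have := abs_le.1 (abs_distDiff_le_one h w)
  rw [distDiff] at this ⊢
  split_ifs <;> omega

theorem abs_sub_le_one_sub_mul {R : Type*} [CommRing R] [LinearOrder R] [IsStrictOrderedRing R]
    {a b : R} (ha : |a| ≤ 1) (hb : |b| ≤ 1) : |a - b| ≤ 1 - a * b := by
  rw [abs_le] at ha hb ⊢
  have h₁ : 0 ≤ (1 + a) * (1 - b) := mul_nonneg (by linarith) (by linarith)
  have h₂ : 0 ≤ (1 - a) * (1 + b) := mul_nonneg (by linarith) (by linarith)
  constructor <;> linarith

theorem sum_one_add_mul_sum_one_sub {ι R : Type*} [Fintype ι] [CommRing R] (g : ι → R) :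
    (∑ i, (1 + g i)) * ∑ i, (1 - g i) = ∑ i, ∑ j, (1 - g i * g j) := by
  simp only [sum_add_distrib, sum_sub_distrib, ← mul_sum, ← sum_mul, sum_const, card_univ,
    nsmul_eq_mul]
  ring

theorem sum_sum_edgeVariation_distDiff_le (h : G.Adj s t) :
    ∑ u, ∑ v, edgeVariation (distDiff G u v) s(s, t) ≤
      (2 * (closerCount G s t : ℤ) + equidistCount G s t) *
        (2 * closerCount G t s + equidistCount G t s) := by
  rw [two_mul_closerCount_add_equidistCount h, two_mul_closerCount_add_equidistCount h.symm]
  simp only [distDiff_swap G s t, ← sub_eq_add_neg, sum_one_add_mul_sum_one_sub]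
  gcongr with u _ v _
  rw [edgeVariation_mk, distDiff_sub_distDiff]
  exact abs_sub_le_one_sub_mul (abs_distDiff_le_one h u) (abs_distDiff_le_one h v)

theorem sum_sum_sum_edgeVariation_distDiff_le (G : SimpleGraph V) :
    ((∑ u, ∑ v, ∑ e ∈ G.edgeFinset, edgeVariation (distDiff G u v) e : ℤ) : ℚ) ≤
      4 * revisedSzeged G := by
  have hcomm : ∑ u, ∑ v, ∑ e ∈ G.edgeFinset, edgeVariation (distDiff G u v) e =
      ∑ e ∈ G.edgeFinset, ∑ u, ∑ v, edgeVariation (distDiff G u v) e := by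
    simp_rw [sum_comm (s := univ) (t := G.edgeFinset)]
  rw [hcomm, revisedSzeged, mul_sum, Int.cast_sum]
  refine sum_le_sum fun e he ↦ ?_
  induction e with | _ s t
  have hst : G.Adj s t := by simpa using he
  have hterm : ((∑ u, ∑ v, edgeVariation (distDiff G u v) s(s, t) : ℤ) : ℚ) ≤
      (2 * closerCount G s t + equidistCount G s t) *
        (2 * closerCount G t s + equidistCount G t s) :=
    mod_cast sum_sum_edgeVariation_distDiff_le hst
  rw [Sym2.lift_mk]
  linarith

end RevisedSzeged

section Wiener

theorem sum_sum_sym2_mk {α M : Type*} [Fintype α] [AddCommMonoid M] (f : Sym2 α → M)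
    (hf : ∀ a, f s(a, a) = 0) : ∑ a, ∑ b, f s(a, b) = 2 • ∑ e, f e := by
  rw [← Fintype.sum_prod_type' (f := fun a b ↦ f s(a, b)), smul_sum,
    ← sum_fiberwise (g := fun p : α × α ↦ s(p.1, p.2))]
  refine sum_congr rfl fun e _ ↦ ?_
  rw [sum_congr rfl fun p hp ↦ congrArg f (mem_filter.1 hp).2, sum_const]
  induction e with | _ a b
  obtain rfl | hab := eq_or_ne a b
  · simp [hf]
  · have hfiber : ({p | s(p.1, p.2) = s(a, b)} : Finset (α × α)) = {(a, b), (b, a)} := by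
      ext ⟨x, y⟩
      simp
    rw [hfiber, card_pair (by simp [hab])]

theorem sum_sum_dist_eq_two_mul_wiener [Fintype V] (G : SimpleGraph V) :
    ∑ u, ∑ v, G.dist u v = 2 * wiener G :=
  sum_sum_sym2_mk (Sym2.lift ⟨fun u v ↦ G.dist u v, fun _ _ ↦ G.dist_comm⟩)
    fun _ ↦ SimpleGraph.dist_self

end Wiener

section Block

variable {G : SimpleGraph V}

theorem noCutVertexSub_subgraphOfAdj {s t : V} (h : G.Adj s t) :
    NoCutVertexSub G (G.subgraphOfAdj h) := by
  refine ⟨SimpleGraph.Subgraph.subgraphOfAdj_connected h, ?_⟩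
  rintro v ⟨x, hx⟩ ⟨y, hy⟩
  obtain rfl | hxy := eq_or_ne x y
  · rfl
  · refine SimpleGraph.Adj.reachable ?_
    simp only [SimpleGraph.Subgraph.coe_adj, SimpleGraph.Subgraph.deleteVerts_adj]
    refine ⟨hx.1, hx.2, hy.1, hy.2, ?_⟩
    have hx' : x = s ∨ x = t := by simpa using hx.1
    have hy' : y = s ∨ y = t := by simpa using hy.1
    grind [SimpleGraph.subgraphOfAdj_adj]

theorem NoCutVertexSub.exists_isBlock_ge [Finite V] {H : G.Subgraph} (hH : NoCutVertexSub G H) :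
    ∃ B, IsBlock G B ∧ H ≤ B := by
  obtain ⟨B, hle, hB⟩ :=
    (Set.toFinite {H : G.Subgraph | NoCutVertexSub G H}).exists_le_maximal hH
  exact ⟨B, ⟨hB.prop, fun _ hK hBK ↦ hB.eq_of_le hK hBK⟩, hle⟩

theorem isHamiltonianCycle_cycleGraph_cycle (n : ℕ) :
    (SimpleGraph.cycleGraph.cycle n).IsHamiltonianCycle :=
  SimpleGraph.Walk.isHamiltonianCycle_iff_isCycle_and_length_eq.2
    ⟨SimpleGraph.cycleGraph.isCycle_cycle, by simp⟩

theorem IsCycleBlock.isEdgeReachable_two {B : G.Subgraph} (hB : IsCycleBlock G B) {s t : V}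
    (hs : s ∈ B.verts) (ht : t ∈ B.verts) : G.IsEdgeReachable 2 s t := by
  obtain ⟨n, hn, ⟨ψ⟩⟩ := hB
  obtain ⟨m, rfl⟩ := Nat.exists_eq_add_of_le' hn
  let φ : SimpleGraph.cycleGraph (m + 3) →g G := B.hom.comp ψ.symm.toHom
  have hφ : Function.Injective φ := B.hom_injective.comp ψ.symm.injective
  let c := (SimpleGraph.cycleGraph.cycle m).map φ
  have hc : c.IsCycle := SimpleGraph.cycleGraph.isCycle_cycle.map hφ
  have hmem : ∀ x ∈ B.verts, x ∈ c.support := fun x hx ↦ by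
    rw [SimpleGraph.Walk.support_map, List.mem_map]
    exact ⟨ψ ⟨x, hx⟩, (isHamiltonianCycle_cycleGraph_cycle m).mem_support _, by simp [φ]⟩
  exact hc.isTrail.isEdgeReachable_two (hmem s hs) (hmem t ht)

theorem isEdgeConnected_two_of_forall_isCycleBlock [Finite V] (hG : G.Preconnected)
    (hblocks : ∀ B : G.Subgraph, IsBlock G B → IsCycleBlock G B) : G.IsEdgeConnected 2 := by
  have hadj {s t : V} (h : G.Adj s t) : G.IsEdgeReachable 2 s t := by
    obtain ⟨B, hB, hle⟩ := (noCutVertexSub_subgraphOfAdj h).exists_isBlock_ge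
    exact (hblocks B hB).isEdgeReachable_two (hle.1 (by simp)) (hle.1 (by simp))
  intro u v
  obtain ⟨p⟩ := hG u v
  induction p with
  | nil => rfl
  | cons h _ ih => exact (hadj h).trans ih

end Block

theorem two_wiener_le_revisedSzeged_general [Fintype V] (G : SimpleGraph V)
    (hG : G.IsEdgeConnected 2) : 2 * (wiener G : ℚ) ≤ revisedSzeged G := by
  have hdist : 4 * (∑ u, ∑ v, (G.dist u v : ℤ)) ≤
      ∑ u, ∑ v, ∑ e ∈ G.edgeFinset, edgeVariation (distDiff G u v) e := by
    simp only [mul_sum]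
    gcongr with u _ v _
    exact four_mul_dist_le_sum_edgeVariation (hG u v)
  have hwiener : ∑ u, ∑ v, (G.dist u v : ℤ) = 2 * wiener G :=
    mod_cast sum_sum_dist_eq_two_mul_wiener G
  rw [hwiener] at hdist
  have hszeged := sum_sum_sum_edgeVariation_distDiff_le G
  have hdist' : (4 * (2 * wiener G) : ℚ) ≤
      ((∑ u, ∑ v, ∑ e ∈ G.edgeFinset, edgeVariation (distDiff G u v) e : ℤ) : ℚ) :=
    mod_cast hdist
  linarith

/-- **Theorem.** If every block of a finite simple connected graph `G` is a cycle, then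
`2·W(G) ≤ Sz*(G)`. -/
theorem two_wiener_le_revisedSzeged [Fintype V] (G : SimpleGraph V) (hG : G.Connected)
    (hblocks : ∀ B : G.Subgraph, IsBlock G B → IsCycleBlock G B) :
    2 * (wiener G : ℚ) ≤ revisedSzeged G :=
  two_wiener_le_revisedSzeged_general G
    (isEdgeConnected_two_of_forall_isCycleBlock hG.preconnected hblocks)
end

section
/- Let C be the cycle graph on n ≥ 3 vertices and let u and v be two distinct vertices of C. Then no edge of C is (u,v)-distance-equal; that is, deq_C(u,v) = 0. -/
open Finset

attribute [local instance] Classical.propDecidable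

variable {V : Type*}

/-!
On the cycle, `d(u, w)` is `min x (n - x)`, where `x` is the residue of `w - u` in `[0, n)`.
Along an edge `{s, s + 1}` the residue `x` of `s - u` steps to `x + 1` or wraps around to `0`, so
equality of the two distances forces `x = n - (x + 1)`. Thus `2x + 1 = n`, and `u` is determined
by `s`: an edge has at most one vertex equidistant from its two ends.
-/

lemma deqCount_eq_zero_iff [Fintype V] {G : SimpleGraph V} {u v : V} :
    deqCount G u v = 0 ↔
      ∀ s t, G.Adj s t → G.dist u s = G.dist u t → G.dist v s ≠ G.dist v t := by
  rw [deqCount, Finset.card_eq_zero, Finset.filter_eq_empty_iff, Sym2.forall]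
  simp only [SimpleGraph.mem_edgeFinset, SimpleGraph.mem_edgeSet, IsDistEqual, Sym2.lift_mk,
    not_and, ne_eq]

lemma le_add_length_of_forall_adj_le_add_one {G : SimpleGraph V} {f : V → ℕ}
    (hf : ∀ a b, G.Adj a b → f a ≤ f b + 1) {u v : V} (p : G.Walk u v) :
    f u ≤ f v + p.length := by
  induction p with
  | nil => exact Nat.le_add_right _ _
  | @cons a b c hab p ih =>
    calc f a ≤ f b + 1 := hf a b hab
      _ ≤ f c + p.length + 1 := Nat.add_le_add_right ih 1
      _ = f c + (SimpleGraph.Walk.cons hab p).length := by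
        rw [SimpleGraph.Walk.length_cons, add_assoc]

lemma le_add_dist_of_forall_adj_le_add_one {G : SimpleGraph V} {f : V → ℕ}
    (hf : ∀ a b, G.Adj a b → f a ≤ f b + 1) {u v : V} (huv : G.Reachable u v) :
    f u ≤ f v + G.dist u v := by
  obtain ⟨p, hp⟩ := huv.exists_walk_length_eq_dist
  exact hp ▸ le_add_length_of_forall_adj_le_add_one hf p

section CycleGraph

open SimpleGraph

variable {n : ℕ} [NeZero n] {s t u v : Fin n}

lemma val_sub_of_val_sub_eq_one (hst : (t - s).val = 1) (u : Fin n) :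
    (t - u).val = if (s - u).val + 1 = n then 0 else (s - u).val + 1 := by
  rw [← sub_add_sub_cancel' s u t, Fin.val_add_eq_ite, hst]
  split_ifs <;> omega

lemma dist_cycleGraph_le_val_sub (u v : Fin n) :
    (cycleGraph n).dist u v ≤ (v - u).val := by
  induction hk : (v - u).val generalizing v with
  | zero =>
    obtain rfl : v = u := sub_eq_zero.mp (Fin.ext hk)
    exact dist_self.le
  | succ k ih =>
    have hn : 1 < n := by omega
    have hstep : (v - (v - 1)).val = 1 := by
      rw [sub_sub_cancel, Fin.val_one', Nat.mod_eq_of_lt hn]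
    have hpred : (v - 1 - u).val = k := by
      have := val_sub_of_val_sub_eq_one hstep u
      split_ifs at this <;> omega
    have hadj : (cycleGraph n).Adj (v - 1) v := cycleGraph_adj'.mpr (Or.inr hstep)
    calc (cycleGraph n).dist u v
        ≤ (cycleGraph n).dist u (v - 1) + (cycleGraph n).dist (v - 1) v :=
          (cycleGraph_preconnected u (v - 1)).dist_triangle_left v
      _ ≤ k + 1 := Nat.add_le_add (ih (v - 1) hpred) (dist_eq_one_iff_adj.mpr hadj).le

lemma dist_cycleGraph_le_sub_val_sub (u v : Fin n) :
    (cycleGraph n).dist u v ≤ n - (v - u).val := by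
  rcases eq_or_ne v u with rfl | hvu
  · exact dist_self.trans_le (Nat.zero_le _)
  calc (cycleGraph n).dist u v = (cycleGraph n).dist v u := dist_comm
    _ ≤ (u - v).val := dist_cycleGraph_le_val_sub v u
    _ = n - (v - u).val := by
      rw [← neg_sub v u, Fin.val_neg, if_neg (sub_ne_zero.mpr hvu)]

lemma min_val_sub_le_dist_cycleGraph (u v : Fin n) :
    min (v - u).val (n - (v - u).val) ≤ (cycleGraph n).dist u v := by
  let f (w : Fin n) : ℕ := min (w - u).val (n - (w - u).val)
  have hf (s t : Fin n) (hst : (cycleGraph n).Adj s t) : f s ≤ f t + 1 := by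
    rcases cycleGraph_adj'.mp hst with h | h
    all_goals
      have := val_sub_of_val_sub_eq_one h u
      dsimp only [f]
      split_ifs at this <;> omega
  have hfu : f u = 0 := by simp [f]
  calc f v ≤ f u + (cycleGraph n).dist v u :=
        le_add_dist_of_forall_adj_le_add_one hf (cycleGraph_preconnected v u)
    _ = (cycleGraph n).dist u v := by rw [hfu, zero_add, dist_comm]

lemma dist_cycleGraph (u v : Fin n) :
    (cycleGraph n).dist u v = min (v - u).val (n - (v - u).val) :=
  le_antisymm (le_min (dist_cycleGraph_le_val_sub u v) (dist_cycleGraph_le_sub_val_sub u v))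
    (min_val_sub_le_dist_cycleGraph u v)

lemma two_mul_val_sub_add_one_of_dist_eq (hst : (t - s).val = 1)
    (h : (cycleGraph n).dist u s = (cycleGraph n).dist u t) : 2 * (s - u).val + 1 = n := by
  rw [dist_cycleGraph, dist_cycleGraph, val_sub_of_val_sub_eq_one hst] at h
  split_ifs at h <;> omega

lemma eq_of_cycleGraph_adj_of_dist_eq (hst : (cycleGraph n).Adj s t)
    (hu : (cycleGraph n).dist u s = (cycleGraph n).dist u t)
    (hv : (cycleGraph n).dist v s = (cycleGraph n).dist v t) : u = v := by
  wlog h : (t - s).val = 1 generalizing s t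
  · exact this hst.symm hu.symm hv.symm ((cycleGraph_adj'.mp hst).resolve_right h)
  have hsu : 2 * (s - u).val + 1 = n := two_mul_val_sub_add_one_of_dist_eq h hu
  have hsv : 2 * (s - v).val + 1 = n := two_mul_val_sub_add_one_of_dist_eq h hv
  have hsub : s - u = s - v := Fin.ext (by omega)
  exact sub_right_injective hsub

end CycleGraph

/-- **Lemma (off-diagonal distance-equal count on a cycle).**
For distinct vertices `u ≠ v` of the cycle graph `C` on `n ≥ 3` vertices, no edge of `C` is
`(u,v)`-distance-equal, i.e. `deq_C(u,v) = 0`. -/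
theorem deqCount_cycleGraph_of_ne (n : ℕ) (hn : 3 ≤ n) (u v : Fin n) (huv : u ≠ v) :
    deqCount (SimpleGraph.cycleGraph n) u v = 0 := by
  have : NeZero n := u.neZero
  rw [deqCount_eq_zero_iff]
  intro s t hst hu hv
  exact huv (eq_of_cycleGraph_adj_of_dist_eq hst hu hv)
end
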